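/- arXiv:1401.6991 — 12 statements merged into one kernel-verified Lean document; each statement's English description precedes it below -/
import Mathlib

section
/- Let P, Q, R : ℝ → ℝ be real-analytic with P(u) ≠ 0 for all u, let τ : ℝ → ℝ be smooth, and let φ : ℤ → ℝ → ℝ → ℝ, (n,t,u) ↦ φₙ(t,u), be smooth in (t,u) for each n. If the determining equation holds for all n ∈ ℤ and all t, u, x, z ∈ ℝ, then there exist real constants τ₁, τ₀, a₁, a₂, b₁, b₂, c₁, c₂ such that τ(t) = τ₁ t + τ₀ for all t, and φₙ(t,u) = (a₁ + (−1)ⁿ a₂) + (b₁ + (−1)ⁿ b₂) u + (c₁ + (−1)ⁿ c₂) u² for all n, t, u. -/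
/-- The determining equation for Lie point symmetries of the generalized
Krichever–Novikov differential–difference equation
`u̇ₙ = [P(uₙ)uₙ₊₁uₙ₋₁ + Q(uₙ)(uₙ₊₁+uₙ₋₁) + R(uₙ)]/(uₙ₊₁−uₙ₋₁)`,
where `x` and `z` play the roles of `uₙ₊₁` and `uₙ₋₁`. -/
def DeterminingEq (P Q R τ : ℝ → ℝ) (φ : ℤ → ℝ → ℝ → ℝ) : Prop :=
  ∀ (n : ℤ) (t u x z : ℝ),
    deriv (fun s => φ n s u) t * (x - z) ^ 2
      + (deriv (fun v => φ n t v) u - deriv τ t)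
        * (P u * (x * z) + Q u * (x + z) + R u) * (x - z)
      - φ n t u * (deriv P u * (x * z) + deriv Q u * (x + z) + deriv R u) * (x - z)
    = φ (n - 1) t z * (P u * x ^ 2 + 2 * Q u * x + R u)
      - φ (n + 1) t x * (P u * z ^ 2 + 2 * Q u * z + R u)

lemma kn_dense (p q r : ℝ) (hp : p ≠ 0) :
    Dense {z : ℝ | p * z ^ 2 + 2 * q * z + r ≠ 0} := by
  have hne : (Polynomial.C p * Polynomial.X ^ 2 + Polynomial.C (2 * q) * Polynomial.X
      + Polynomial.C r : Polynomial ℝ) ≠ 0 := by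
    intro h
    have := Polynomial.natDegree_quadratic (b := 2 * q) (c := r) hp
    rw [h] at this
    simp at this
  have hfin := Polynomial.finite_setOfPred_isRoot hne
  have := hfin.countable.dense_compl ℝ
  refine this.mono ?_
  intro z hz
  simpa [Polynomial.IsRoot] using hz

lemma kn_ext (p q r : ℝ) (hp : p ≠ 0) (f g : ℝ → ℝ) (hf : Continuous f) (hg : Continuous g)
    (h : ∀ z, 0 = f z * (p * z ^ 2 + 2 * q * z + r) - g z * (p * z ^ 2 + 2 * q * z + r)) :
    f = g := by
  refine Continuous.ext_on (kn_dense p q r hp) hf hg ?_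
  intro z hz
  have h1 := h z
  have : (f z - g z) * (p * z ^ 2 + 2 * q * z + r) = 0 := by linarith
  rcases mul_eq_zero.mp this with h2 | h2
  · linarith
  · exact absurd h2 hz

/-- If `P, Q, R` are real-analytic with `P` nowhere vanishing, `τ` is smooth,
each `φₙ` is smooth in `(t,u)`, and the determining equation holds, then `τ`
is affine in `t` and `φₙ(t,u) = αₙ + βₙ u + γₙ u²` with
`αₙ = a₁ + (−1)ⁿ a₂`, `βₙ = b₁ + (−1)ⁿ b₂`, `γₙ = c₁ + (−1)ⁿ c₂`. -/
theorem symmetry_vector_field_form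
    (P Q R : ℝ → ℝ) (τ : ℝ → ℝ) (φ : ℤ → ℝ → ℝ → ℝ)
    (hPan : ∀ u : ℝ, AnalyticAt ℝ P u)
    (hQan : ∀ u : ℝ, AnalyticAt ℝ Q u)
    (hRan : ∀ u : ℝ, AnalyticAt ℝ R u)
    (hP0 : ∀ u : ℝ, P u ≠ 0)
    (hτ : ContDiff ℝ (⊤ : ℕ∞) τ)
    (hφ : ∀ n : ℤ, ContDiff ℝ (⊤ : ℕ∞) (fun p : ℝ × ℝ => φ n p.1 p.2))
    (hdet : DeterminingEq P Q R τ φ) :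
    ∃ τ₁ τ₀ a₁ a₂ b₁ b₂ c₁ c₂ : ℝ,
      (∀ t : ℝ, τ t = τ₁ * t + τ₀) ∧
      (∀ (n : ℤ) (t u : ℝ),
        φ n t u = (a₁ + (-1 : ℝ) ^ n * a₂) + (b₁ + (-1 : ℝ) ^ n * b₂) * u
          + (c₁ + (-1 : ℝ) ^ n * c₂) * u ^ 2) := by
  have hcu : ∀ n t, Continuous (fun u => φ n t u) := fun n t =>
    (hφ n).continuous.comp (by fun_prop : Continuous fun u : ℝ => (t, u))
  have hdt : ∀ n u, Differentiable ℝ (fun s => φ n s u) := fun n u =>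
    ((hφ n).differentiable (by simp)).comp
      (by fun_prop : Differentiable ℝ fun s : ℝ => (s, u))
  have hper : ∀ n t, φ (n - 1) t = φ (n + 1) t := by
    intro n t
    refine kn_ext (P 0) (Q 0) (R 0) (hP0 0) _ _ (hcu _ _) (hcu _ _) ?_
    intro z
    have := hdet n t 0 z z
    rw [← this]; ring
  have hA : ∀ n t u, deriv (fun s => φ n s u) t = 0 := by
    intro n t u
    have h1 := hdet n t u 1 0
    have h2 := hdet n t u 0 1
    rw [hper n t] at h1 h2
    linarith
  have hconst : ∀ n t u, φ n t u = φ n 0 u := fun n t u =>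
    is_const_of_deriv_eq_zero (hdt n u) (fun s => hA n s u) t 0
  -- `τ` is affine
  have hτd : ∀ t, deriv τ t = deriv τ 0 := by
    intro t
    have key : ∀ x z : ℝ, (deriv τ t - deriv τ 0) *
        ((P 0 * (x * z) + Q 0 * (x + z) + R 0) * (x - z)) = 0 := by
      intro x z
      have h1 := hdet 0 t 0 x z
      have h2 := hdet 0 0 0 x z
      have e : (fun v => φ 0 t v) = fun v => φ 0 0 v := funext fun v => hconst 0 t v
      rw [hA, e, hconst 0 t, hconst (0 - 1) t, hconst (0 + 1) t] at h1
      rw [hA] at h2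
      linarith
    by_contra hne
    have hne' : deriv τ t - deriv τ 0 ≠ 0 := sub_ne_zero.mpr hne
    have k1 := (mul_eq_zero.mp (key 1 (-1))).resolve_left hne'
    have k2 := (mul_eq_zero.mp (key 1 0)).resolve_left hne'
    have k3 := (mul_eq_zero.mp (key (-1) 0)).resolve_left hne'
    exact hP0 0 (by linarith)
  have hτaff : ∀ t, τ t = deriv τ 0 * t + τ 0 := by
    intro t
    have hd : Differentiable ℝ τ := hτ.differentiable (by simp)
    have := is_const_of_deriv_eq_zero (f := fun s => τ s - deriv τ 0 * s)
      (by fun_prop) (fun s => by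
        have h := ((hd s).hasDerivAt.sub ((hasDerivAt_id s).const_mul (deriv τ 0))).deriv
        have h' : deriv (fun s => τ s - deriv τ 0 * s) s = deriv τ s - deriv τ 0 * 1 := h
        rw [h', hτd s]; ring) t 0
    linarith
  -- quadratic form
  have hquad : ∀ n, ∃ a b c : ℝ, ∀ u, φ n 0 u = a + b * u + c * u ^ 2 := by
    intro n
    obtain ⟨w, hw⟩ := (kn_dense (P 0) (Q 0) (R 0) (hP0 0)).nonempty
    simp only [Set.mem_ofPred_eq] at hw
    set F := P 0 * w ^ 2 + 2 * Q 0 * w + R 0 with hF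
    set B := deriv (fun v => φ (n - 1) 0 v) 0 - deriv τ 0 with hB
    set C := φ (n - 1) 0 0 with hC
    set k := φ (n - 1 - 1) 0 w with hk
    refine ⟨(k * R 0 + (B * (Q 0 * w + R 0) - C * (deriv Q 0 * w + deriv R 0)) * w) / F,
      (k * (2 * Q 0) - (B * (Q 0 * w + R 0) - C * (deriv Q 0 * w + deriv R 0))
        + (B * (P 0 * w + Q 0) - C * (deriv P 0 * w + deriv Q 0)) * w) / F,
      (k * P 0 - (B * (P 0 * w + Q 0) - C * (deriv P 0 * w + deriv Q 0))) / F, ?_⟩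
    intro u
    have h := hdet (n - 1) 0 0 u w
    rw [hA, ← hB, ← hC, ← hk, ← hF, sub_add_cancel] at h
    field_simp
    linarith
  have hstep : ∀ n, φ (n + 2) 0 = φ n 0 := by
    intro n
    have := hper (n + 1) 0
    rw [add_sub_cancel_right, add_assoc] at this
    exact this.symm
  have hmul : ∀ (m k : ℤ), φ (m + 2 * k) 0 = φ m 0 := by
    intro m k
    induction k using Int.induction_on with
    | zero => simp
    | succ i ih => rw [← ih, ← hstep (m + 2 * i)]; congr 1; ring
    | pred i ih => rw [← ih, ← hstep (m + 2 * (-i - 1))]; congr 1; ring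
  obtain ⟨a, b, c, h0⟩ := hquad 0
  obtain ⟨a', b', c', h1⟩ := hquad 1
  refine ⟨deriv τ 0, τ 0, (a + a') / 2, (a - a') / 2, (b + b') / 2, (b - b') / 2,
    (c + c') / 2, (c - c') / 2, hτaff, ?_⟩
  intro n t u
  rw [hconst n t u]
  rcases Int.even_or_odd n with hn | hn
  · rw [hn.neg_one_zpow]
    obtain ⟨k, rfl⟩ := hn
    have := hmul 0 k
    rw [show k + k = 0 + 2 * k by ring, this, h0]; ring
  · rw [hn.neg_one_zpow]
    obtain ⟨k, rfl⟩ := hn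
    have := hmul 1 k
    rw [show 2 * k + 1 = 1 + 2 * k by ring, this, h1]; ring
end

section
/- Let P, Q, R : ℝ → ℝ be differentiable with P(u) ≠ 0 for all u, let τ : ℝ → ℝ be differentiable, and let φ : ℤ → ℝ → ℝ → ℝ be such that each φₙ(t,·) is twice continuously differentiable in u and differentiable in t. If the determining equation holds for all n ∈ ℤ and all t, u, x, z ∈ ℝ, then for all n ∈ ℤ, t ∈ ℝ and all x, y ∈ ℝ one has ∂²ᵤφₙ₊₁(t,x) = ∂²ᵤφₙ₋₁(t,y); in particular ∂²ᵤφₙ(t,u) is independent of u. -/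
lemma deriv2_quad (f : ℝ → ℝ) (a b c : ℝ) (hf : ∀ x, f x = a * x ^ 2 + b * x + c) (x : ℝ) :
    deriv (deriv (fun v => f v)) x = 2 * a := by
  have h1 : deriv (fun v => f v) = fun x => 2 * a * x + b := by
    funext y
    have e : (fun v => f v) = fun x => a * x ^ 2 + b * x + c := funext hf
    rw [e]
    have := ((((hasDerivAt_id y).pow 2).const_mul a).add
      ((hasDerivAt_id y).const_mul b)).add_const c
    refine HasDerivAt.deriv (this.congr_deriv ?_)
    simp
    ring
  rw [h1]
  have := ((hasDerivAt_id x).const_mul (2 * a)).add_const b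
  exact HasDerivAt.deriv (this.congr_deriv (by simp))

lemma quad_core (f g : ℝ → ℝ) (A B C p q r p' q' r' : ℝ) (hp : p ≠ 0)
    (h : ∀ x z : ℝ, A * (x - z) ^ 2 + B * (p * (x * z) + q * (x + z) + r) * (x - z)
      - C * (p' * (x * z) + q' * (x + z) + r') * (x - z)
      = g z * (p * x ^ 2 + 2 * q * x + r) - f x * (p * z ^ 2 + 2 * q * z + r)) (x y : ℝ) :
    deriv (deriv (fun v => f v)) x = deriv (deriv (fun v => g v)) y := by
  obtain ⟨w, hw⟩ : ∃ w : ℝ, p * w ^ 2 + 2 * q * w + r ≠ 0 := by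
    by_contra! hc
    apply hp
    linear_combination (hc 1 + hc (-1) - 2 * hc 0) / 2
  obtain ⟨a, b, c, hf⟩ : ∃ a b c : ℝ, ∀ x, f x = a * x ^ 2 + b * x + c := by
    refine ⟨(g w * p - A - B * (p * w + q) + C * (p' * w + q')) / (p * w ^ 2 + 2 * q * w + r),
      (g w * (2 * q) + 2 * A * w - B * (r - p * w ^ 2) + C * (r' - p' * w ^ 2))
        / (p * w ^ 2 + 2 * q * w + r),
      (g w * r - A * w ^ 2 + B * (q * w + r) * w - C * (q' * w + r') * w)
        / (p * w ^ 2 + 2 * q * w + r), fun x => ?_⟩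
    rw [div_mul_eq_mul_div, div_mul_eq_mul_div, ← add_div, ← add_div, eq_div_iff hw]
    linear_combination h x w
  obtain ⟨a', b', c', hg⟩ : ∃ a b c : ℝ, ∀ x, g x = a * x ^ 2 + b * x + c := by
    refine ⟨(f w * p + A - B * (p * w + q) + C * (p' * w + q')) / (p * w ^ 2 + 2 * q * w + r),
      (f w * (2 * q) - 2 * A * w - B * (r - p * w ^ 2) + C * (r' - p' * w ^ 2))
        / (p * w ^ 2 + 2 * q * w + r),
      (f w * r + A * w ^ 2 + B * (q * w + r) * w - C * (q' * w + r') * w)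
        / (p * w ^ 2 + 2 * q * w + r), fun z => ?_⟩
    rw [div_mul_eq_mul_div, div_mul_eq_mul_div, ← add_div, ← add_div, eq_div_iff hw]
    linear_combination -h w z
  rw [deriv2_quad f a b c hf, deriv2_quad g a' b' c' hg]
  have h' : ∀ x : ℝ, (a * x ^ 2 + b * x + c - (a' * x ^ 2 + b' * x + c'))
      * (p * x ^ 2 + 2 * q * x + r) = 0 := by
    intro x
    rw [← hf, ← hg]
    linear_combination h x x
  have : p * (a - a') = 0 := by
    linear_combination (h' 2 - 4 * h' 1 + 6 * h' 0 - 4 * h' (-1) + h' (-2)) / 24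
  have := (mul_eq_zero.mp this).resolve_left hp
  linear_combination 2 * this

/-- If the determining equation holds (with `P` nowhere vanishing), then
`∂²ᵤφₙ₊₁(t,x) = ∂²ᵤφₙ₋₁(t,y)` for all `n, t, x, y`; in particular the second
`u`-derivative of `φₙ` is independent of `u`. -/
theorem second_derivative_relation
    (P Q R : ℝ → ℝ) (τ : ℝ → ℝ) (φ : ℤ → ℝ → ℝ → ℝ)
    (hPd : Differentiable ℝ P)
    (hQd : Differentiable ℝ Q)
    (hRd : Differentiable ℝ R)
    (hP0 : ∀ u : ℝ, P u ≠ 0)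
    (hτd : Differentiable ℝ τ)
    (hφu : ∀ (n : ℤ) (t : ℝ), ContDiff ℝ 2 (fun v => φ n t v))
    (hφt : ∀ (n : ℤ) (u : ℝ), Differentiable ℝ (fun s => φ n s u))
    (hdet : DeterminingEq P Q R τ φ) :
    ∀ (n : ℤ) (t x y : ℝ),
      deriv (deriv (fun v => φ (n + 1) t v)) x
        = deriv (deriv (fun v => φ (n - 1) t v)) y := by
  intro n t x y
  have h : ∀ x z : ℝ, _ := fun x z => hdet n t 0 x z
  generalize deriv (fun s => φ n s 0) t = A at h
  generalize deriv (fun v => φ n t v) 0 - deriv τ t = B at h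
  generalize φ n t 0 = C at h
  have hp := hP0 0
  generalize P 0 = p at h hp
  generalize Q 0 = q at h
  generalize R 0 = r at h
  generalize deriv P 0 = p' at h
  generalize deriv Q 0 = q' at h
  generalize deriv R 0 = r' at h
  generalize φ (n + 1) t = f at h ⊢
  generalize φ (n - 1) t = g at h ⊢
  exact quad_core f g A B C p q r p' q' r' hp h x y
end

section
/- Let P, Q, R : ℝ → ℝ be differentiable, let τ₁, τ₀, a₁, a₂, b₁, b₂, c₁, c₂ be real constants, set τ(t) = τ₁ t + τ₀ and φₙ(t,u) = (a₁ + (−1)ⁿ a₂) + (b₁ + (−1)ⁿ b₂)u + (c₁ + (−1)ⁿ c₂)u². Then the determining equation holds for all n ∈ ℤ and all t, u, x, z ∈ ℝ if and only if the six equations (E1)–(E6) hold for all u ∈ ℝ. -/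
/-- With `τ(t) = τ₁ t + τ₀` and
`φₙ(t,u) = (a₁ + (−1)ⁿ a₂) + (b₁ + (−1)ⁿ b₂)u + (c₁ + (−1)ⁿ c₂)u²`,
the determining equation holds iff the six equations (E1)–(E6) hold
for all `u ∈ ℝ`. -/
theorem determining_eq_iff_six_equations
    (P Q R : ℝ → ℝ)
    (hPd : Differentiable ℝ P)
    (hQd : Differentiable ℝ Q)
    (hRd : Differentiable ℝ R)
    (τ₁ τ₀ a₁ a₂ b₁ b₂ c₁ c₂ : ℝ) :
    DeterminingEq P Q R (fun t => τ₁ * t + τ₀)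
      (fun (n : ℤ) (_t u : ℝ) =>
        (a₁ + (-1 : ℝ) ^ n * a₂) + (b₁ + (-1 : ℝ) ^ n * b₂) * u
          + (c₁ + (-1 : ℝ) ^ n * c₂) * u ^ 2)
    ↔ ∀ u : ℝ,
      (-a₁ * P u + c₁ * R u - (a₁ + b₁ * u + c₁ * u ^ 2) * deriv Q u
          + (b₁ + 2 * c₁ * u - τ₁) * Q u = 0) ∧
      (a₂ * P u - c₂ * R u - (a₂ + b₂ * u + c₂ * u ^ 2) * deriv Q u
          + (b₂ + 2 * c₂ * u) * Q u = 0) ∧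
      (2 * c₁ * Q u - (a₁ + b₁ * u + c₁ * u ^ 2) * deriv P u
          + (2 * c₁ * u - τ₁) * P u = 0) ∧
      (-2 * c₂ * Q u - (a₂ + b₂ * u + c₂ * u ^ 2) * deriv P u
          + (2 * b₂ + 2 * c₂ * u) * P u = 0) ∧
      (-2 * a₁ * Q u - (a₁ + b₁ * u + c₁ * u ^ 2) * deriv R u
          + (2 * b₁ + 2 * c₁ * u - τ₁) * R u = 0) ∧
      (2 * a₂ * Q u - (a₂ + b₂ * u + c₂ * u ^ 2) * deriv R u
          + 2 * c₂ * u * R u = 0) := by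
  have hd : ∀ A B C u : ℝ, deriv (fun v : ℝ => A + B * v + C * v ^ 2) u = B + 2 * C * u := by
    intro A B C u
    have h := (((hasDerivAt_id u).const_mul B).const_add A).add
      (((hasDerivAt_id u).pow 2).const_mul C)
    have h2 : HasDerivAt (fun v : ℝ => A + B * v + C * v ^ 2) (B + 2 * C * u) u := by
      refine HasDerivAt.congr_deriv (f := fun v : ℝ => A + B * v + C * v ^ 2) h ?_
      simp
      ring
    exact h2.deriv
  have ht : ∀ t : ℝ, deriv (fun t : ℝ => τ₁ * t + τ₀) t = τ₁ := by
    intro t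
    simp
  have hm : ∀ n : ℤ, (-1 : ℝ) ^ (n - 1) = -(-1 : ℝ) ^ n := by
    intro n
    rw [zpow_sub_one₀ (by norm_num)]
    norm_num
  have hp : ∀ n : ℤ, (-1 : ℝ) ^ (n + 1) = -(-1 : ℝ) ^ n := by
    intro n
    rw [zpow_add_one₀ (by norm_num)]
    norm_num
  unfold DeterminingEq
  simp only [hd, ht, hm, hp, deriv_const]
  constructor
  · intro h u
    have h1 := h 0 0 u 1 0
    have h2 := h 0 0 u (-1) 0
    have h3 := h 0 0 u 1 (-1)
    have k1 := h 1 0 u 1 0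
    have k2 := h 1 0 u (-1) 0
    have k3 := h 1 0 u 1 (-1)
    simp only [zpow_zero, zpow_one] at h1 h2 h3 k1 k2 k3
    refine ⟨?_, ?_, ?_, ?_, ?_, ?_⟩ <;> linarith
  · intro h n t u x z
    obtain ⟨e1, e2, e3, e4, e5, e6⟩ := h u
    generalize (-1 : ℝ) ^ n = e
    linear_combination (x - z) * ((x + z) * (e1 + e * e2) + x * z * (e3 + e * e4) + (e5 + e * e6))
end

section
/- Let P, Q, R : ℝ → ℝ, let ξ₁, ξ₂, ξ₃, ξ₄, θ₁, θ₂ ∈ ℝ with ξ₁ξ₄ − ξ₂ξ₃ = ±1 and θ₁ ≠ 0, and set M(v) = (ξ₁v+ξ₂)/(ξ₃v+ξ₄). Suppose u* : ℤ → ℝ → ℝ is differentiable in t and for all n, t one has ξ₃u*ₙ(t) + ξ₄ ≠ 0 and u*ₙ₊₁(t) ≠ u*ₙ₋₁(t), and suppose the functions uₙ(t) := M(u*ₙ((t − θ₂)/θ₁)) satisfy u̇ₙ = [P(uₙ)uₙ₊₁uₙ₋₁ + Q(uₙ)(uₙ₊₁+uₙ₋₁) + R(uₙ)]/(uₙ₊₁−uₙ₋₁).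 Then u* satisfies u̇*ₙ = [P̃(u*ₙ)u*ₙ₊₁u*ₙ₋₁ + Q̃(u*ₙ)(u*ₙ₊₁+u*ₙ₋₁) + R̃(u*ₙ)]/(u*ₙ₊₁−u*ₙ₋₁), where P̃(v) = θ₁(ξ₃v+ξ₄)²[ξ₁²P(M(v)) + 2ξ₁ξ₃Q(M(v)) + ξ₃²R(M(v))], Q̃(v) = θ₁(ξ₃v+ξ₄)²[ξ₁ξ₂P(M(v)) + (ξ₁ξ₄+ξ₂ξ₃)Q(M(v)) + ξ₃ξ₄R(M(v))], R̃(v) = θ₁(ξ₃v+ξ₄)²[ξ₂²P(M(v)) + 2ξ₂ξ₄Q(M(v)) + ξ₄²R(M(v))]. -/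
theorem kn_alg (p q r x1 x2 x3 x4 th a b c D : ℝ)
    (hdet : (x1 * x4 - x2 * x3) ^ 2 = 1) (hth : th ≠ 0)
    (ha : x3 * a + x4 ≠ 0) (hb : x3 * b + x4 ≠ 0) (hc : x3 * c + x4 ≠ 0) (hab : a ≠ b)
    (h : (x1 * x4 - x2 * x3) * D / (th * (x3 * c + x4) ^ 2) =
      (p * ((x1 * a + x2) / (x3 * a + x4) * ((x1 * b + x2) / (x3 * b + x4)))
        + q * ((x1 * a + x2) / (x3 * a + x4) + (x1 * b + x2) / (x3 * b + x4)) + r)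
      / ((x1 * a + x2) / (x3 * a + x4) - (x1 * b + x2) / (x3 * b + x4))) :
    D = ((th * (x3 * c + x4) ^ 2 * (x1 ^ 2 * p + 2 * x1 * x3 * q + x3 ^ 2 * r)) * (a * b)
      + (th * (x3 * c + x4) ^ 2 * (x1 * x2 * p + (x1 * x4 + x2 * x3) * q + x3 * x4 * r)) * (a + b)
      + th * (x3 * c + x4) ^ 2 * (x2 ^ 2 * p + 2 * x2 * x4 * q + x4 ^ 2 * r)) / (a - b) := by
  have hab' : a - b ≠ 0 := sub_ne_zero.mpr hab
  have hD0 : x1 * x4 - x2 * x3 ≠ 0 := by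
    intro h0
    rw [h0] at hdet
    norm_num at hdet
  have e1 : (x1 * a + x2) / (x3 * a + x4) - (x1 * b + x2) / (x3 * b + x4)
      = (x1 * x4 - x2 * x3) * (a - b) / ((x3 * a + x4) * (x3 * b + x4)) := by
    rw [div_sub_div _ _ ha hb]
    congr 1
    ring
  have e2 : p * ((x1 * a + x2) / (x3 * a + x4) * ((x1 * b + x2) / (x3 * b + x4)))
        + q * ((x1 * a + x2) / (x3 * a + x4) + (x1 * b + x2) / (x3 * b + x4)) + r
      = (p * ((x1 * a + x2) * (x1 * b + x2))
        + q * ((x1 * a + x2) * (x3 * b + x4) + (x1 * b + x2) * (x3 * a + x4))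
        + r * ((x3 * a + x4) * (x3 * b + x4))) / ((x3 * a + x4) * (x3 * b + x4)) := by
    rw [div_add_div _ _ ha hb, div_mul_div_comm, eq_div_iff (mul_ne_zero ha hb), add_mul, add_mul,
      mul_assoc p, mul_assoc q, div_mul_cancel₀ _ (mul_ne_zero ha hb),
      div_mul_cancel₀ _ (mul_ne_zero ha hb)]
    ring
  rw [e1, e2, div_div_div_cancel_right₀ (mul_ne_zero ha hb),
    div_eq_div_iff (mul_ne_zero hth (pow_ne_zero 2 hc)) (mul_ne_zero hD0 hab')] at h
  rw [eq_div_iff hab']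
  linear_combination h - D * (a - b) * hdet

/-- Allowed transformations: a Möbius transformation of `uₙ` combined with an
affine transformation of `t` maps a solution of the generalized
Krichever–Novikov differential–difference equation with coefficients
`P, Q, R` to a solution of an equation of the same form with the transformed
coefficients `P̃, Q̃, R̃`. -/
theorem allowed_transformation
    (P Q R : ℝ → ℝ) (ξ₁ ξ₂ ξ₃ ξ₄ θ₁ θ₂ : ℝ)
    (hdet : ξ₁ * ξ₄ - ξ₂ * ξ₃ = 1 ∨ ξ₁ * ξ₄ - ξ₂ * ξ₃ = -1)
    (hθ₁ : θ₁ ≠ 0)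
    (M : ℝ → ℝ) (hM : M = fun v => (ξ₁ * v + ξ₂) / (ξ₃ * v + ξ₄))
    (ustar : ℤ → ℝ → ℝ)
    (hdiff : ∀ n : ℤ, Differentiable ℝ (ustar n))
    (hden : ∀ (n : ℤ) (t : ℝ), ξ₃ * ustar n t + ξ₄ ≠ 0)
    (hne : ∀ (n : ℤ) (t : ℝ), ustar (n + 1) t ≠ ustar (n - 1) t)
    (u : ℤ → ℝ → ℝ) (hu : u = fun n t => M (ustar n ((t - θ₂) / θ₁)))
    (heq : ∀ (n : ℤ) (t : ℝ),
      deriv (u n) t =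
        (P (u n t) * (u (n + 1) t * u (n - 1) t)
          + Q (u n t) * (u (n + 1) t + u (n - 1) t) + R (u n t))
        / (u (n + 1) t - u (n - 1) t)) :
    ∀ (n : ℤ) (t : ℝ),
      deriv (ustar n) t =
        ((θ₁ * (ξ₃ * ustar n t + ξ₄) ^ 2
            * (ξ₁ ^ 2 * P (M (ustar n t)) + 2 * ξ₁ * ξ₃ * Q (M (ustar n t))
                + ξ₃ ^ 2 * R (M (ustar n t))))
            * (ustar (n + 1) t * ustar (n - 1) t)
          + (θ₁ * (ξ₃ * ustar n t + ξ₄) ^ 2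
            * (ξ₁ * ξ₂ * P (M (ustar n t)) + (ξ₁ * ξ₄ + ξ₂ * ξ₃) * Q (M (ustar n t))
                + ξ₃ * ξ₄ * R (M (ustar n t))))
            * (ustar (n + 1) t + ustar (n - 1) t)
          + θ₁ * (ξ₃ * ustar n t + ξ₄) ^ 2
            * (ξ₂ ^ 2 * P (M (ustar n t)) + 2 * ξ₂ * ξ₄ * Q (M (ustar n t))
                + ξ₄ ^ 2 * R (M (ustar n t))))
        / (ustar (n + 1) t - ustar (n - 1) t) := by
  intro n t
  subst hM hu
  have h := heq n (θ₁ * t + θ₂)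
  have ht : (θ₁ * t + θ₂ - θ₂) / θ₁ = t := by
    rw [add_sub_cancel_right, mul_div_cancel_left₀ _ hθ₁]
  have hs : HasDerivAt (fun s : ℝ => (s - θ₂) / θ₁) (1 / θ₁) (θ₁ * t + θ₂) :=
    ((hasDerivAt_id _).sub_const θ₂).div_const θ₁
  have hv : HasDerivAt (ustar n) (deriv (ustar n) t) ((θ₁ * t + θ₂ - θ₂) / θ₁) := by
    rw [ht]
    exact (hdiff n t).hasDerivAt
  have hw : HasDerivAt (fun s : ℝ => ustar n ((s - θ₂) / θ₁))
      (deriv (ustar n) t * (1 / θ₁)) (θ₁ * t + θ₂) :=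
    HasDerivAt.comp (θ₁ * t + θ₂) hv hs
  have hfull := ((hw.const_mul ξ₁).add_const ξ₂).fun_div ((hw.const_mul ξ₃).add_const ξ₄)
    (hden n _)
  have hd := hfull.deriv
  simp only [ht] at h hd
  rw [hd] at h
  have hc := hden n t
  apply kn_alg _ _ _ ξ₁ ξ₂ ξ₃ ξ₄ θ₁ _ _ _ _ ?_ hθ₁ (hden (n + 1) t) (hden (n - 1) t) hc (hne n t)
  · rw [← h]
    field_simp
    ring
  · rcases hdet with h1 | h1 <;> rw [h1] <;> norm_num
end

section
/- Let ρ ≠ 0 and A ∈ ℝ, and define P(u) = A e^{ρ·arctan u}(1 + u²), Q(u) = 0, R(u) = A e^{ρ·arctan u}(1 + u²). Then the six determining equations (E1)–(E6) hold for all u ∈ ℝ with the parameter values τ₁ = −ρ, a₁ = 1, b₁ = 0, c₁ = 1, a₂ = b₂ = c₂ = 0. -/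
/-- The functions `P(u) = A e^{ρ arctan u}(1 + u²)`, `Q = 0`,
`R(u) = A e^{ρ arctan u}(1 + u²)` satisfy the six determining equations
(E1)–(E6) with `τ₁ = −ρ`, `a₁ = 1`, `b₁ = 0`, `c₁ = 1`, `a₂ = b₂ = c₂ = 0`. -/
theorem six_equations_arctan_case
    (ρ A : ℝ) (hρ : ρ ≠ 0)
    (P Q R : ℝ → ℝ)
    (hP : ∀ u : ℝ, P u = A * Real.exp (ρ * Real.arctan u) * (1 + u ^ 2))
    (hQ : ∀ u : ℝ, Q u = 0)
    (hR : ∀ u : ℝ, R u = A * Real.exp (ρ * Real.arctan u) * (1 + u ^ 2))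
    (τ₁ a₁ a₂ b₁ b₂ c₁ c₂ : ℝ)
    (hτ₁ : τ₁ = -ρ) (ha₁ : a₁ = 1) (hb₁ : b₁ = 0) (hc₁ : c₁ = 1)
    (ha₂ : a₂ = 0) (hb₂ : b₂ = 0) (hc₂ : c₂ = 0) :
    ∀ u : ℝ,
      (-a₁ * P u + c₁ * R u - (a₁ + b₁ * u + c₁ * u ^ 2) * deriv Q u
          + (b₁ + 2 * c₁ * u - τ₁) * Q u = 0) ∧
      (a₂ * P u - c₂ * R u - (a₂ + b₂ * u + c₂ * u ^ 2) * deriv Q u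
          + (b₂ + 2 * c₂ * u) * Q u = 0) ∧
      (2 * c₁ * Q u - (a₁ + b₁ * u + c₁ * u ^ 2) * deriv P u
          + (2 * c₁ * u - τ₁) * P u = 0) ∧
      (-2 * c₂ * Q u - (a₂ + b₂ * u + c₂ * u ^ 2) * deriv P u
          + (2 * b₂ + 2 * c₂ * u) * P u = 0) ∧
      (-2 * a₁ * Q u - (a₁ + b₁ * u + c₁ * u ^ 2) * deriv R u
          + (2 * b₁ + 2 * c₁ * u - τ₁) * R u = 0) ∧
      (2 * a₂ * Q u - (a₂ + b₂ * u + c₂ * u ^ 2) * deriv R u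
          + 2 * c₂ * u * R u = 0) := by
  have hRP : R = P := funext fun u => by rw [hP, hR]
  have hQ0 : Q = fun _ => 0 := funext hQ
  have hPf : P = fun u => A * Real.exp (ρ * Real.arctan u) * (1 + u ^ 2) := funext hP
  intro u
  have hd : deriv P u = A * Real.exp (ρ * Real.arctan u) * (ρ + 2 * u) := by
    have h1 : HasDerivAt (fun u : ℝ => A * Real.exp (ρ * Real.arctan u))
        (A * (Real.exp (ρ * Real.arctan u) * (ρ * (1 / (1 + u ^ 2))))) u :=
      (((Real.hasDerivAt_arctan u).const_mul ρ).exp).const_mul A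
    have h2 : HasDerivAt (fun u : ℝ => 1 + u ^ 2) (2 * u) u := by
      simpa using (hasDerivAt_pow 2 u).const_add 1
    have h3 := (h1.mul h2).deriv
    have hne : (1 + u ^ 2 : ℝ) ≠ 0 := by positivity
    rw [hPf]
    refine h3.trans ?_
    field_simp
  have hdQ : deriv Q u = 0 := by rw [hQ0]; simp
  subst hRP hτ₁ ha₁ hb₁ hc₁ ha₂ hb₂ hc₂
  rw [hd, hdQ, hQ u, hP u]
  refine ⟨?_, ?_, ?_, ?_, ?_, ?_⟩ <;> ring
end

section
/- Let ρ ≠ 0 and A, B, C ∈ ℝ, and on the interval (−1, 1) define W(u) = ((1+u)/(1−u))^ρ (real power), P(u) = W(u)(A + Bu + Cu²), Q(u) = −(1/2)W(u)(Bu² + (2A+2C)u + B), R(u) = W(u)(C + Bu + Au²). Then the six determining equations (E1)–(E6) hold for all u ∈ (−1, 1) with the parameter values τ₁ = 2ρ, a₁ = −1, b₁ = 0, c₁ = 1, a₂ = b₂ = c₂ = 0. -/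
/-- On `(−1, 1)`, with `W(u) = ((1+u)/(1−u))^ρ`, the functions
`P = W·(A + Bu + Cu²)`, `Q = −(1/2)W·(Bu² + (2A+2C)u + B)`,
`R = W·(C + Bu + Au²)` satisfy the six determining equations (E1)–(E6) with
`τ₁ = 2ρ`, `a₁ = −1`, `b₁ = 0`, `c₁ = 1`, `a₂ = b₂ = c₂ = 0`. -/
theorem six_equations_pseudorotation_case
    (ρ A B C : ℝ) (hρ : ρ ≠ 0)
    (W P Q R : ℝ → ℝ)
    (hW : ∀ u ∈ Set.Ioo (-1 : ℝ) 1, W u = ((1 + u) / (1 - u)) ^ ρ)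
    (hP : ∀ u ∈ Set.Ioo (-1 : ℝ) 1, P u = W u * (A + B * u + C * u ^ 2))
    (hQ : ∀ u ∈ Set.Ioo (-1 : ℝ) 1,
      Q u = -(1 / 2) * W u * (B * u ^ 2 + (2 * A + 2 * C) * u + B))
    (hR : ∀ u ∈ Set.Ioo (-1 : ℝ) 1, R u = W u * (C + B * u + A * u ^ 2))
    (τ₁ a₁ a₂ b₁ b₂ c₁ c₂ : ℝ)
    (hτ₁ : τ₁ = 2 * ρ) (ha₁ : a₁ = -1) (hb₁ : b₁ = 0) (hc₁ : c₁ = 1)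
    (ha₂ : a₂ = 0) (hb₂ : b₂ = 0) (hc₂ : c₂ = 0) :
    ∀ u ∈ Set.Ioo (-1 : ℝ) 1,
      (-a₁ * P u + c₁ * R u - (a₁ + b₁ * u + c₁ * u ^ 2) * deriv Q u
          + (b₁ + 2 * c₁ * u - τ₁) * Q u = 0) ∧
      (a₂ * P u - c₂ * R u - (a₂ + b₂ * u + c₂ * u ^ 2) * deriv Q u
          + (b₂ + 2 * c₂ * u) * Q u = 0) ∧
      (2 * c₁ * Q u - (a₁ + b₁ * u + c₁ * u ^ 2) * deriv P u
          + (2 * c₁ * u - τ₁) * P u = 0) ∧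
      (-2 * c₂ * Q u - (a₂ + b₂ * u + c₂ * u ^ 2) * deriv P u
          + (2 * b₂ + 2 * c₂ * u) * P u = 0) ∧
      (-2 * a₁ * Q u - (a₁ + b₁ * u + c₁ * u ^ 2) * deriv R u
          + (2 * b₁ + 2 * c₁ * u - τ₁) * R u = 0) ∧
      (2 * a₂ * Q u - (a₂ + b₂ * u + c₂ * u ^ 2) * deriv R u
          + 2 * c₂ * u * R u = 0) := by
  intro u hu
  have hnhds : Set.Ioo (-1 : ℝ) 1 ∈ nhds u := Ioo_mem_nhds hu.1 hu.2
  have h1 : (0 : ℝ) < 1 + u := by linarith [hu.1]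
  have h2 : (0 : ℝ) < 1 - u := by linarith [hu.2]
  have hpos : 0 < (1 + u) / (1 - u) := div_pos h1 h2
  obtain ⟨D, hD, hDW⟩ : ∃ D, HasDerivAt W D u ∧ (u ^ 2 - 1) * D = -2 * ρ * W u := by
    have e1 : HasDerivAt (fun x : ℝ => 1 + x) 1 u := (hasDerivAt_id u).const_add 1
    have e2 : HasDerivAt (fun x : ℝ => 1 - x) (-1) u := (hasDerivAt_id u).const_sub 1
    have e3 : HasDerivAt (fun x : ℝ => (1 + x) / (1 - x))
        ((1 * (1 - u) - (1 + u) * (-1)) / (1 - u) ^ 2) u := e1.fun_div e2 h2.ne'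
    have e4 := e3.rpow_const (p := ρ) (Or.inl hpos.ne')
    refine ⟨_, e4.congr_of_eventuallyEq (Filter.eventuallyEq_of_mem hnhds hW), ?_⟩
    rw [hW u hu, Real.rpow_sub_one hpos.ne']
    field_simp
    ring
  have dP : deriv P u = D * (A + B * u + C * u ^ 2) + W u * (B + 2 * C * u) := by
    have e : HasDerivAt (fun x : ℝ => A + B * x + C * x ^ 2) (B + 2 * C * u) u := by
      have := (((hasDerivAt_id u).const_mul B).const_add A).add
        (((hasDerivAt_id u).pow 2).const_mul C)
      refine HasDerivAt.congr_deriv this ?_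
      simp; ring
    exact ((hD.mul e).congr_of_eventuallyEq (Filter.eventuallyEq_of_mem hnhds hP)).deriv
  have dR : deriv R u = D * (C + B * u + A * u ^ 2) + W u * (B + 2 * A * u) := by
    have e : HasDerivAt (fun x : ℝ => C + B * x + A * x ^ 2) (B + 2 * A * u) u := by
      have := (((hasDerivAt_id u).const_mul B).const_add C).add
        (((hasDerivAt_id u).pow 2).const_mul A)
      refine HasDerivAt.congr_deriv this ?_
      simp; ring
    exact ((hD.mul e).congr_of_eventuallyEq (Filter.eventuallyEq_of_mem hnhds hR)).deriv
  have dQ : deriv Q u = -(1 / 2) * D * (B * u ^ 2 + (2 * A + 2 * C) * u + B)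
      + -(1 / 2) * W u * (2 * B * u + (2 * A + 2 * C)) := by
    have e : HasDerivAt (fun x : ℝ => B * x ^ 2 + (2 * A + 2 * C) * x + B)
        (2 * B * u + (2 * A + 2 * C)) u := by
      have := ((((hasDerivAt_id u).pow 2).const_mul B).add
        ((hasDerivAt_id u).const_mul (2 * A + 2 * C))).add_const B
      refine HasDerivAt.congr_deriv this ?_
      simp; ring
    exact (((hD.const_mul (-(1 / 2))).mul e).congr_of_eventuallyEq
      (Filter.eventuallyEq_of_mem hnhds hQ)).deriv
  subst hτ₁ ha₁ hb₁ hc₁ ha₂ hb₂ hc₂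
  rw [dP, dQ, dR, hP u hu, hQ u hu, hR u hu]
  refine ⟨?_, by ring, ?_, by ring, ?_, by ring⟩
  · linear_combination (1 / 2) * (B * u ^ 2 + (2 * A + 2 * C) * u + B) * hDW
  · linear_combination -(A + B * u + C * u ^ 2) * hDW
  · linear_combination -(C + B * u + A * u ^ 2) * hDW
end

section
/- Let ρ ≠ 0 and A, B, C ∈ ℝ, and on the interval (0, ∞) define P(u) = e^{ρ/u}(A + Bu + Cu²), Q(u) = −(1/2)e^{ρ/u}(Bu² + 2Au), R(u) = e^{ρ/u}Au². Then the six determining equations (E1)–(E6) hold for all u > 0 with the parameter values τ₁ = ρ, a₁ = 0, b₁ = 0, c₁ = 1, a₂ = b₂ = c₂ = 0. -/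
/-- On `(0, ∞)`, the functions `P(u) = e^{ρ/u}(A + Bu + Cu²)`,
`Q(u) = −(1/2)e^{ρ/u}(Bu² + 2Au)`, `R(u) = e^{ρ/u} A u²` satisfy the six
determining equations (E1)–(E6) with `τ₁ = ρ`, `a₁ = 0`, `b₁ = 0`, `c₁ = 1`,
`a₂ = b₂ = c₂ = 0`. -/
theorem six_equations_unipotent_case
    (ρ A B C : ℝ) (hρ : ρ ≠ 0)
    (P Q R : ℝ → ℝ)
    (hP : ∀ u ∈ Set.Ioi (0 : ℝ),
      P u = Real.exp (ρ / u) * (A + B * u + C * u ^ 2))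
    (hQ : ∀ u ∈ Set.Ioi (0 : ℝ),
      Q u = -(1 / 2) * Real.exp (ρ / u) * (B * u ^ 2 + 2 * A * u))
    (hR : ∀ u ∈ Set.Ioi (0 : ℝ), R u = Real.exp (ρ / u) * (A * u ^ 2))
    (τ₁ a₁ a₂ b₁ b₂ c₁ c₂ : ℝ)
    (hτ₁ : τ₁ = ρ) (ha₁ : a₁ = 0) (hb₁ : b₁ = 0) (hc₁ : c₁ = 1)
    (ha₂ : a₂ = 0) (hb₂ : b₂ = 0) (hc₂ : c₂ = 0) :
    ∀ u ∈ Set.Ioi (0 : ℝ),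
      (-a₁ * P u + c₁ * R u - (a₁ + b₁ * u + c₁ * u ^ 2) * deriv Q u
          + (b₁ + 2 * c₁ * u - τ₁) * Q u = 0) ∧
      (a₂ * P u - c₂ * R u - (a₂ + b₂ * u + c₂ * u ^ 2) * deriv Q u
          + (b₂ + 2 * c₂ * u) * Q u = 0) ∧
      (2 * c₁ * Q u - (a₁ + b₁ * u + c₁ * u ^ 2) * deriv P u
          + (2 * c₁ * u - τ₁) * P u = 0) ∧
      (-2 * c₂ * Q u - (a₂ + b₂ * u + c₂ * u ^ 2) * deriv P u
          + (2 * b₂ + 2 * c₂ * u) * P u = 0) ∧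
      (-2 * a₁ * Q u - (a₁ + b₁ * u + c₁ * u ^ 2) * deriv R u
          + (2 * b₁ + 2 * c₁ * u - τ₁) * R u = 0) ∧
      (2 * a₂ * Q u - (a₂ + b₂ * u + c₂ * u ^ 2) * deriv R u
          + 2 * c₂ * u * R u = 0) := by
  subst hτ₁ ha₁ hb₁ hc₁ ha₂ hb₂ hc₂
  intro u hu
  have hu0 : u ≠ 0 := ne_of_gt hu
  have hn : Set.Ioi (0 : ℝ) ∈ nhds u := Ioi_mem_nhds hu
  -- derivative of a product of the exponential with a quadratic
  have key : ∀ (F : ℝ → ℝ) (x y z : ℝ),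
      (∀ v ∈ Set.Ioi (0 : ℝ), F v = Real.exp (τ₁ / v) * (x + y * v + z * v ^ 2)) →
      u ^ 2 * deriv F u = Real.exp (τ₁ / u) *
        (-τ₁ * (x + y * u + z * u ^ 2) + u ^ 2 * (y + 2 * z * u)) := by
    intro F x y z hF
    have h1 : HasDerivAt (fun v : ℝ => τ₁ / v) (-τ₁ / u ^ 2) u := by
      have h := (hasDerivAt_inv hu0).const_mul τ₁
      refine (h.congr_deriv ?_).congr_of_eventuallyEq
        (Filter.Eventually.of_forall fun v => div_eq_mul_inv τ₁ v)
      field_simp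
    have h2 : HasDerivAt (fun v : ℝ => x + y * v + z * v ^ 2) (y + 2 * z * u) u := by
      have h := (((hasDerivAt_id u).const_mul y).const_add x).add
        (((hasDerivAt_id u).pow 2).const_mul z)
      refine HasDerivAt.congr_deriv (f' := _) h ?_
      simp
      ring
    have h3 := (h1.exp.mul h2).congr_of_eventuallyEq
      (Filter.eventuallyEq_of_mem hn (fun v hv => hF v hv))
    rw [h3.deriv]
    field_simp
  have kP := key P A B C hP
  have kQ := key Q 0 (-A) (-(1 / 2) * B) (fun v hv => by rw [hQ v hv]; ring)
  have kR := key R 0 0 A (fun v hv => by rw [hR v hv]; ring)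
  have eP := hP u hu
  have eQ := hQ u hu
  have eR := hR u hu
  refine ⟨?_, by ring, ?_, by ring, ?_, by ring⟩
  · simp only [zero_mul, zero_add, one_mul, kQ, eP, eQ, eR]
    ring
  · simp only [zero_mul, zero_add, one_mul, kP, eP, eQ, eR]
    ring
  · simp only [zero_mul, zero_add, one_mul, kR, eP, eQ, eR]
    ring
end

section
/- Let ρ ≠ 0, b₁ ≠ 0 and A, B, C ∈ ℝ, and on the interval (0, ∞) define P(u) = A u^ρ, Q(u) = B u^{1+ρ}, R(u) = C u^{2+ρ} (real powers). Then the six determining equations (E1)–(E6) hold for all u > 0 with the parameter values τ₁ = −ρ b₁, a₁ = 0, c₁ = 0, a₂ = b₂ = c₂ = 0 (b₁ arbitrary nonzero). -/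
/-- Euler identity for a power function on the positive half-line. -/
theorem euler_power_aux (F : ℝ → ℝ) (K s : ℝ)
    (hF : ∀ u ∈ Set.Ioi (0 : ℝ), F u = K * u ^ s) (u : ℝ) (hu : u ∈ Set.Ioi (0 : ℝ)) :
    u * deriv F u = s * F u := by
  have hpos : 0 < u := hu
  have hev : F =ᶠ[nhds u] fun x => K * x ^ s :=
    Filter.eventuallyEq_of_mem (Ioi_mem_nhds hpos) hF
  have hd : HasDerivAt (fun x : ℝ => K * x ^ s) (K * (s * u ^ (s - 1))) u :=
    (Real.hasDerivAt_rpow_const (Or.inl hpos.ne')).const_mul K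
  rw [hev.deriv_eq, hd.deriv, hF u hu, Real.rpow_sub_one hpos.ne']
  field_simp

/-- On `(0, ∞)`, the power functions `P(u) = A u^ρ`, `Q(u) = B u^{1+ρ}`,
`R(u) = C u^{2+ρ}` satisfy the six determining equations (E1)–(E6) with
`τ₁ = −ρ b₁`, `a₁ = 0`, `c₁ = 0`, `a₂ = b₂ = c₂ = 0`, for any `b₁ ≠ 0`. -/
theorem six_equations_power_case
    (ρ A B C : ℝ) (hρ : ρ ≠ 0)
    (P Q R : ℝ → ℝ)
    (hP : ∀ u ∈ Set.Ioi (0 : ℝ), P u = A * u ^ ρ)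
    (hQ : ∀ u ∈ Set.Ioi (0 : ℝ), Q u = B * u ^ (1 + ρ))
    (hR : ∀ u ∈ Set.Ioi (0 : ℝ), R u = C * u ^ (2 + ρ))
    (τ₁ a₁ a₂ b₁ b₂ c₁ c₂ : ℝ) (hb₁ : b₁ ≠ 0)
    (hτ₁ : τ₁ = -ρ * b₁) (ha₁ : a₁ = 0) (hc₁ : c₁ = 0)
    (ha₂ : a₂ = 0) (hb₂ : b₂ = 0) (hc₂ : c₂ = 0) :
    ∀ u ∈ Set.Ioi (0 : ℝ),
      (-a₁ * P u + c₁ * R u - (a₁ + b₁ * u + c₁ * u ^ 2) * deriv Q u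
          + (b₁ + 2 * c₁ * u - τ₁) * Q u = 0) ∧
      (a₂ * P u - c₂ * R u - (a₂ + b₂ * u + c₂ * u ^ 2) * deriv Q u
          + (b₂ + 2 * c₂ * u) * Q u = 0) ∧
      (2 * c₁ * Q u - (a₁ + b₁ * u + c₁ * u ^ 2) * deriv P u
          + (2 * c₁ * u - τ₁) * P u = 0) ∧
      (-2 * c₂ * Q u - (a₂ + b₂ * u + c₂ * u ^ 2) * deriv P u
          + (2 * b₂ + 2 * c₂ * u) * P u = 0) ∧
      (-2 * a₁ * Q u - (a₁ + b₁ * u + c₁ * u ^ 2) * deriv R u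
          + (2 * b₁ + 2 * c₁ * u - τ₁) * R u = 0) ∧
      (2 * a₂ * Q u - (a₂ + b₂ * u + c₂ * u ^ 2) * deriv R u
          + 2 * c₂ * u * R u = 0) := by
  intro u hu
  have eP := euler_power_aux P A ρ hP u hu
  have eQ := euler_power_aux Q B (1 + ρ) hQ u hu
  have eR := euler_power_aux R C (2 + ρ) hR u hu
  subst hτ₁ ha₁ hc₁ ha₂ hb₂ hc₂
  refine ⟨?_, by ring, ?_, by ring, ?_, by ring⟩
  · linear_combination (-b₁) * eQ
  · linear_combination (-b₁) * eP
  · linear_combination (-b₁) * eR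
end

section
/- Let ρ ≠ 0, a₁ ≠ 0 and A, B, C ∈ ℝ, and define P(u) = A e^{ρu}, Q(u) = e^{ρu}(−Au + B), R(u) = e^{ρu}(Au² − 2Bu + C). Then the six determining equations (E1)–(E6) hold for all u ∈ ℝ with the parameter values τ₁ = −a₁ρ, b₁ = 0, c₁ = 0, a₂ = b₂ = c₂ = 0 (a₁ arbitrary nonzero). -/
/-- The functions `P(u) = A e^{ρu}`, `Q(u) = e^{ρu}(−Au + B)`,
`R(u) = e^{ρu}(Au² − 2Bu + C)` satisfy the six determining equations
(E1)–(E6) with `τ₁ = −a₁ρ`, `b₁ = 0`, `c₁ = 0`, `a₂ = b₂ = c₂ = 0`,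
for any `a₁ ≠ 0`. -/
theorem six_equations_exponential_case
    (ρ A B C : ℝ) (hρ : ρ ≠ 0)
    (P Q R : ℝ → ℝ)
    (hP : ∀ u : ℝ, P u = A * Real.exp (ρ * u))
    (hQ : ∀ u : ℝ, Q u = Real.exp (ρ * u) * (-A * u + B))
    (hR : ∀ u : ℝ, R u = Real.exp (ρ * u) * (A * u ^ 2 - 2 * B * u + C))
    (τ₁ a₁ a₂ b₁ b₂ c₁ c₂ : ℝ) (ha₁ : a₁ ≠ 0)
    (hτ₁ : τ₁ = -a₁ * ρ) (hb₁ : b₁ = 0) (hc₁ : c₁ = 0)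
    (ha₂ : a₂ = 0) (hb₂ : b₂ = 0) (hc₂ : c₂ = 0) :
    ∀ u : ℝ,
      (-a₁ * P u + c₁ * R u - (a₁ + b₁ * u + c₁ * u ^ 2) * deriv Q u
          + (b₁ + 2 * c₁ * u - τ₁) * Q u = 0) ∧
      (a₂ * P u - c₂ * R u - (a₂ + b₂ * u + c₂ * u ^ 2) * deriv Q u
          + (b₂ + 2 * c₂ * u) * Q u = 0) ∧
      (2 * c₁ * Q u - (a₁ + b₁ * u + c₁ * u ^ 2) * deriv P u
          + (2 * c₁ * u - τ₁) * P u = 0) ∧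
      (-2 * c₂ * Q u - (a₂ + b₂ * u + c₂ * u ^ 2) * deriv P u
          + (2 * b₂ + 2 * c₂ * u) * P u = 0) ∧
      (-2 * a₁ * Q u - (a₁ + b₁ * u + c₁ * u ^ 2) * deriv R u
          + (2 * b₁ + 2 * c₁ * u - τ₁) * R u = 0) ∧
      (2 * a₂ * Q u - (a₂ + b₂ * u + c₂ * u ^ 2) * deriv R u
          + 2 * c₂ * u * R u = 0) := by
  intro u
  have hE : HasDerivAt (fun x : ℝ => Real.exp (ρ * x)) (Real.exp (ρ * u) * (ρ * 1)) u :=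
    ((hasDerivAt_id' u).const_mul ρ).exp
  have hl : HasDerivAt (fun x : ℝ => -A * x + B) (-A * 1) u :=
    ((hasDerivAt_id' u).const_mul (-A)).add_const B
  have hq : HasDerivAt (fun x : ℝ => A * x ^ 2 - 2 * B * x + C)
      (A * (2 * u) - 2 * B * 1) u := by
    have h2 : HasDerivAt (fun x : ℝ => x ^ 2) (2 * u) u := by
      simpa using hasDerivAt_pow 2 u
    exact ((h2.const_mul A).sub ((hasDerivAt_id' u).const_mul (2 * B))).add_const C
  have dP : deriv P u = A * (Real.exp (ρ * u) * (ρ * 1)) := by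
    rw [funext hP]
    exact (hE.const_mul A).deriv
  have dQ : deriv Q u = Real.exp (ρ * u) * (ρ * 1) * (-A * u + B)
      + Real.exp (ρ * u) * (-A * 1) := by
    rw [funext hQ]
    exact (hE.mul hl).deriv
  have dR : deriv R u = Real.exp (ρ * u) * (ρ * 1) * (A * u ^ 2 - 2 * B * u + C)
      + Real.exp (ρ * u) * (A * (2 * u) - 2 * B * 1) := by
    rw [funext hR]
    exact (hE.mul hq).deriv
  rw [dP, dQ, dR, hP, hQ, hR]
  subst hτ₁ hb₁ hc₁ ha₂ hb₂ hc₂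
  refine ⟨?_, ?_, ?_, ?_, ?_, ?_⟩ <;> ring
end

section
/- Let A ∈ ℝ, λ > 0, and let u : ℤ → I → ℝ (I ⊆ ℝ an open interval) be differentiable with uₙ₊₁(t) ≠ uₙ₋₁(t) for all n, t, satisfying u̇ₙ = e^{uₙ} · [uₙ₊₁uₙ₋₁ + (A − uₙ)(uₙ₊₁+uₙ₋₁) + uₙ² − 2Auₙ]/(uₙ₊₁−uₙ₋₁) for all n ∈ ℤ, t ∈ I. Then the functions vₙ(t) := uₙ(λt) + log λ, defined for λt ∈ I, satisfy the same equation: v̇ₙ = e^{vₙ}[vₙ₊₁vₙ₋₁ + (A − vₙ)(vₙ₊₁+vₙ₋₁) + vₙ² − 2Avₙ]/(vₙ₊₁−vₙ₋₁). -/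
/-- The transformation `vₙ(t) = uₙ(λt) + log λ` (the symmetry generated by
`X₁ = t∂ₜ − ∂_{uₙ}`) maps solutions of equation (5.3),
`u̇ₙ = e^{uₙ}[uₙ₊₁uₙ₋₁ + (A − uₙ)(uₙ₊₁+uₙ₋₁) + uₙ² − 2Auₙ]/(uₙ₊₁−uₙ₋₁)`,
to solutions of the same equation. -/
theorem symmetry_of_eq_5_3
    (A lam : ℝ) (hlam : 0 < lam)
    (I : Set ℝ) (hIopen : IsOpen I) (hIconn : I.OrdConnected)
    (u : ℤ → ℝ → ℝ)
    (hdiff : ∀ (n : ℤ), ∀ t ∈ I, DifferentiableAt ℝ (u n) t)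
    (hne : ∀ (n : ℤ), ∀ t ∈ I, u (n + 1) t ≠ u (n - 1) t)
    (heq : ∀ (n : ℤ), ∀ t ∈ I,
      deriv (u n) t =
        Real.exp (u n t) *
          (u (n + 1) t * u (n - 1) t
            + (A - u n t) * (u (n + 1) t + u (n - 1) t)
            + (u n t) ^ 2 - 2 * A * u n t)
        / (u (n + 1) t - u (n - 1) t))
    (v : ℤ → ℝ → ℝ) (hv : v = fun n t => u n (lam * t) + Real.log lam) :
    ∀ (n : ℤ) (t : ℝ), lam * t ∈ I →
      deriv (v n) t =
        Real.exp (v n t) *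
          (v (n + 1) t * v (n - 1) t
            + (A - v n t) * (v (n + 1) t + v (n - 1) t)
            + (v n t) ^ 2 - 2 * A * v n t)
        / (v (n + 1) t - v (n - 1) t) := by
  intro n t ht
  subst hv
  have h1 : HasDerivAt (fun t : ℝ => lam * t) lam t := by
    simpa using (hasDerivAt_id t).const_mul lam
  have h2 : HasDerivAt (fun t : ℝ => u n (lam * t) + Real.log lam)
      (deriv (u n) (lam * t) * lam) t :=
    ((hdiff n _ ht).hasDerivAt.comp t h1).add_const _
  have h3 := h2.deriv
  simp only
  rw [h3, heq n _ ht, Real.exp_add, Real.exp_log hlam, add_sub_add_right_eq_sub]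
  ring
end

section
/- Let ρ ≠ 0, s ∈ ℝ, and let u : ℤ → I → ℝ (I ⊆ ℝ an open interval) be differentiable with uₙ₊₁(t) ≠ uₙ₋₁(t) for all n, t, satisfying u̇ₙ = e^{ρ·arctan uₙ}(uₙ₊₁uₙ₋₁ + 1)(1 + uₙ²)/(uₙ₊₁−uₙ₋₁) for all n, t. Assume moreover that |arctan(uₙ(e^{ρs}t)) + s| < π/2 for all n and all t with e^{ρs}t ∈ I, and that the functions vₙ(t) := tan(arctan(uₙ(e^{ρs}t)) + s) satisfy vₙ₊₁(t) ≠ vₙ₋₁(t). Then v satisfies the same equation: v̇ₙ = e^{ρ·arctan vₙ}(vₙ₊₁vₙ₋₁ + 1)(1 + vₙ²)/(vₙ₊₁−vₙ₋₁). -/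
open Real

theorem tan_quot_aux (a b : ℝ) (ha : Real.cos a ≠ 0) (hb : Real.cos b ≠ 0) :
    (Real.tan a * Real.tan b + 1) / (Real.tan a - Real.tan b)
      = Real.cos (a - b) / Real.sin (a - b) := by
  have h1 : Real.tan a * Real.tan b + 1 = Real.cos (a - b) / (Real.cos a * Real.cos b) := by
    rw [Real.cos_sub, Real.tan_eq_sin_div_cos, Real.tan_eq_sin_div_cos]
    field_simp
    ring
  have h2 : Real.tan a - Real.tan b = Real.sin (a - b) / (Real.cos a * Real.cos b) := by
    rw [Real.sin_sub, Real.tan_eq_sin_div_cos, Real.tan_eq_sin_div_cos]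
    field_simp
  rw [h1, h2, div_div_div_cancel_right₀ (mul_ne_zero ha hb)]

/-- The transformation `vₙ(t) = tan(arctan(uₙ(e^{ρs}t)) + s)` (the symmetry
generated by `X₁ = t∂ₜ − (1/ρ)(1 + uₙ²)∂_{uₙ}`) maps solutions of equation
(5.1), `u̇ₙ = e^{ρ arctan uₙ}(uₙ₊₁uₙ₋₁ + 1)(1 + uₙ²)/(uₙ₊₁−uₙ₋₁)`,
to solutions of the same equation. -/
theorem symmetry_of_eq_5_1
    (ρ s : ℝ) (hρ : ρ ≠ 0)
    (I : Set ℝ) (hIopen : IsOpen I) (hIconn : I.OrdConnected)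
    (u : ℤ → ℝ → ℝ)
    (hdiff : ∀ (n : ℤ), ∀ t ∈ I, DifferentiableAt ℝ (u n) t)
    (hne : ∀ (n : ℤ), ∀ t ∈ I, u (n + 1) t ≠ u (n - 1) t)
    (heq : ∀ (n : ℤ), ∀ t ∈ I,
      deriv (u n) t =
        Real.exp (ρ * Real.arctan (u n t)) *
          (u (n + 1) t * u (n - 1) t + 1) * (1 + (u n t) ^ 2)
        / (u (n + 1) t - u (n - 1) t))
    (v : ℤ → ℝ → ℝ)
    (hv : v = fun n t => Real.tan (Real.arctan (u n (Real.exp (ρ * s) * t)) + s))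
    (hbranch : ∀ (n : ℤ) (t : ℝ), Real.exp (ρ * s) * t ∈ I →
      |Real.arctan (u n (Real.exp (ρ * s) * t)) + s| < π / 2)
    (hvne : ∀ (n : ℤ) (t : ℝ), Real.exp (ρ * s) * t ∈ I →
      v (n + 1) t ≠ v (n - 1) t) :
    ∀ (n : ℤ) (t : ℝ), Real.exp (ρ * s) * t ∈ I →
      deriv (v n) t =
        Real.exp (ρ * Real.arctan (v n t)) *
          (v (n + 1) t * v (n - 1) t + 1) * (1 + (v n t) ^ 2)
        / (v (n + 1) t - v (n - 1) t) := by
  intro n t ht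
  have hcos : ∀ m : ℤ, Real.cos (Real.arctan (u m (Real.exp (ρ * s) * t)) + s) ≠ 0 := by
    intro m
    have h := abs_lt.mp (hbranch m t ht)
    exact (Real.cos_pos_of_mem_Ioo ⟨by linarith [h.1], h.2⟩).ne'
  have hcos' : ∀ m : ℤ, Real.cos (Real.arctan (u m (Real.exp (ρ * s) * t))) ≠ 0 :=
    fun m => (Real.cos_arctan_pos _).ne'
  have hb := abs_lt.mp (hbranch n t ht)
  have harc : Real.arctan (v n t) = Real.arctan (u n (Real.exp (ρ * s) * t)) + s := by
    rw [hv]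
    exact Real.arctan_tan (by linarith [hb.1]) hb.2
  have hlin : HasDerivAt (fun x : ℝ => Real.exp (ρ * s) * x) (Real.exp (ρ * s)) t := by
    simpa using (hasDerivAt_id t).const_mul (Real.exp (ρ * s))
  have hu := (hdiff n _ ht).hasDerivAt.comp t hlin
  have hd := (Real.hasDerivAt_tan (hcos n)).comp t (hu.arctan.add_const s)
  have hd' : deriv (v n) t = 1 / Real.cos (Real.arctan (u n (Real.exp (ρ * s) * t)) + s) ^ 2 *
      (1 / (1 + u n (Real.exp (ρ * s) * t) ^ 2) *
        (deriv (u n) (Real.exp (ρ * s) * t) * Real.exp (ρ * s))) := by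
    rw [hv]
    exact hd.deriv
  have hq := tan_quot_aux _ _ (hcos (n + 1)) (hcos (n - 1))
  have hq' := tan_quot_aux _ _ (hcos' (n + 1)) (hcos' (n - 1))
  rw [add_sub_add_right_eq_sub, ← hq', Real.tan_arctan, Real.tan_arctan] at hq
  have hvq : (v (n + 1) t * v (n - 1) t + 1) / (v (n + 1) t - v (n - 1) t)
      = (u (n + 1) (Real.exp (ρ * s) * t) * u (n - 1) (Real.exp (ρ * s) * t) + 1)
        / (u (n + 1) (Real.exp (ρ * s) * t) - u (n - 1) (Real.exp (ρ * s) * t)) := by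
    rw [hv]
    exact hq
  have hsec : 1 + (v n t) ^ 2
      = 1 / Real.cos (Real.arctan (u n (Real.exp (ρ * s) * t)) + s) ^ 2 := by
    rw [hv, one_div, ← Real.inv_one_add_tan_sq (hcos n), inv_inv]
  have hpos : 1 + (u n (Real.exp (ρ * s) * t)) ^ 2 ≠ 0 := by positivity
  rw [hd', heq n _ ht, mul_right_comm (Real.exp (ρ * Real.arctan (v n t))), mul_div_assoc (_ * (1 + v n t ^ 2)), hvq,
    harc, hsec, mul_add ρ, Real.exp_add]
  have hc := hcos n
  have hsub := sub_ne_zero.mpr (hne n _ ht)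
  generalize Real.exp (ρ * Real.arctan (u n (Real.exp (ρ * s) * t))) = E
  field_simp
end

section
/- Let ρ ≠ 0 and let γ : ℤ → ℝ satisfy tan(γₙ₊₁ − γₙ₋₁) = −ρ e^{ργₙ} for all n ∈ ℤ. Define uₙ(t) = tan(γₙ − (1/ρ)log t) for t > 0. Then at every n ∈ ℤ and t > 0 such that cos(γₘ − (1/ρ)log t) ≠ 0 for m ∈ {n−1, n, n+1} and uₙ₊₁(t) ≠ uₙ₋₁(t), the function u satisfies u̇ₙ = e^{ρ·arctan uₙ}(uₙ₊₁uₙ₋₁ + 1)(1 + uₙ²)/(uₙ₊₁−uₙ₋₁), where arctan uₙ is understood as γₙ − (1/ρ)log t reduced to (−π/2, π/2) modulo π (equivalently, e^{ρ arctan uₙ} may be replaced by e^{ργₙ} t^{−1} when γₙ − (1/ρ)log t ∈ (−π/2, π/2)). -/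
open Real

/-- Group-invariant solutions of equation (5.1): if `γ : ℤ → ℝ` satisfies the
three-point recursion `tan(γₙ₊₁ − γₙ₋₁) = −ρ e^{ργₙ}`, then
`uₙ(t) = tan(γₙ − (1/ρ) log t)` satisfies
`u̇ₙ = e^{ρ arctan uₙ}(uₙ₊₁uₙ₋₁ + 1)(1 + uₙ²)/(uₙ₊₁−uₙ₋₁)` at every `t > 0`
where the three relevant cosines are nonzero, `uₙ₊₁(t) ≠ uₙ₋₁(t)`, and the
angle `γₙ − (1/ρ) log t` lies in the principal branch `(−π/2, π/2)`
(so that `arctan uₙ = γₙ − (1/ρ) log t`). -/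
theorem invariant_solution_eq_5_1
    (ρ : ℝ) (hρ : ρ ≠ 0) (γ : ℤ → ℝ)
    (hrec : ∀ n : ℤ, Real.tan (γ (n + 1) - γ (n - 1)) = -ρ * Real.exp (ρ * γ n))
    (u : ℤ → ℝ → ℝ)
    (hu : u = fun n t => Real.tan (γ n - (1 / ρ) * Real.log t)) :
    ∀ (n : ℤ) (t : ℝ), 0 < t →
      (∀ m ∈ ({n - 1, n, n + 1} : Set ℤ),
        Real.cos (γ m - (1 / ρ) * Real.log t) ≠ 0) →
      u (n + 1) t ≠ u (n - 1) t →
      γ n - (1 / ρ) * Real.log t ∈ Set.Ioo (-(π / 2)) (π / 2) →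
      deriv (u n) t =
        Real.exp (ρ * Real.arctan (u n t)) *
          (u (n + 1) t * u (n - 1) t + 1) * (1 + (u n t) ^ 2)
        / (u (n + 1) t - u (n - 1) t) := by
  intro n t ht hcos hne hmem
  subst hu
  have hA := hcos (n + 1) (by simp)
  have hB := hcos (n - 1) (by simp)
  have hC := hcos n (by simp)
  have hr := hrec n
  have hd : HasDerivAt (fun s => Real.tan (γ n - (1 / ρ) * Real.log s))
      (1 / Real.cos (γ n - (1 / ρ) * Real.log t) ^ 2 * (-((1 / ρ) * t⁻¹))) t := by
    have h1 : HasDerivAt (fun s => γ n - (1 / ρ) * Real.log s) (-((1 / ρ) * t⁻¹)) t :=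
      ((Real.hasDerivAt_log ht.ne').const_mul (1 / ρ)).const_sub (γ n)
    exact (Real.hasDerivAt_tan hC).comp t h1
  have harc : Real.arctan (Real.tan (γ n - (1 / ρ) * Real.log t))
      = γ n - (1 / ρ) * Real.log t := Real.arctan_tan hmem.1 hmem.2
  have hexp : Real.exp (ρ * (γ n - (1 / ρ) * Real.log t)) = Real.exp (ρ * γ n) / t := by
    have : ρ * (γ n - (1 / ρ) * Real.log t) = ρ * γ n - Real.log t := by
      field_simp
    rw [this, Real.exp_sub, Real.exp_log ht]
  have hsq : 1 + Real.tan (γ n - (1 / ρ) * Real.log t) ^ 2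
      = 1 / Real.cos (γ n - (1 / ρ) * Real.log t) ^ 2 := by
    rw [Real.tan_eq_sin_div_cos]
    generalize γ n - (1 / ρ) * Real.log t = C at hC
    field_simp
    linarith [Real.sin_sq_add_cos_sq C]
  simp only at hne ⊢
  rw [hd.deriv, harc, hexp, hsq]
  have hdiff : γ (n + 1) - γ (n - 1) = (γ (n + 1) - (1 / ρ) * Real.log t)
      - (γ (n - 1) - (1 / ρ) * Real.log t) := by ring
  rw [hdiff] at hr
  generalize γ (n + 1) - (1 / ρ) * Real.log t = A at *
  generalize γ (n - 1) - (1 / ρ) * Real.log t = B at *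
  generalize Real.cos (γ n - (1 / ρ) * Real.log t) = c at *
  have hE := Real.exp_pos (ρ * γ n)
  generalize Real.exp (ρ * γ n) = E at *
  have hcd : Real.cos (A - B) ≠ 0 := by
    intro h
    rw [Real.tan_eq_sin_div_cos, h, div_zero] at hr
    have : -ρ * E ≠ 0 := mul_ne_zero (neg_ne_zero.mpr hρ) hE.ne'
    exact this hr.symm
  rw [Real.tan_eq_sin_div_cos, div_eq_iff hcd, Real.sin_sub, Real.cos_sub] at hr
  have hkey : Real.tan A - Real.tan B = -ρ * E * (Real.tan A * Real.tan B + 1) := by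
    rw [Real.tan_eq_sin_div_cos, Real.tan_eq_sin_div_cos]
    field_simp
    linarith
  rw [eq_div_iff (sub_ne_zero.mpr hne), hkey]
  field_simp
end
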